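/- arXiv:1008.1007 — 3 statements merged into one kernel-verified Lean document; each statement's English description precedes it below -/
import Mathlib

section
/- The R-module R ⊕ R ⊕ (R[t]/S) is not isomorphic to a direct sum of cyclic R-modules: there is no index set J and no family of ideals (I_j)_{j∈J} of R such that R ⊕ R ⊕ (R[t]/S) is isomorphic as an R-module to the direct sum ⊕_{j∈J} R/I_j. -/
open Polynomial
open LaurentPolynomial (T)

noncomputable section

abbrev R : Type := LaurentPolynomial ℤ

/-- `Q` is the family of polynomials `Q n ∈ R[t]` (for `n ≥ -2`) defined by `Q (-2) = -1`,
`Q (-1) = 0` and the recurrence `Q n = t Q (n-1) - Q (n-2)` for `n ≥ 0`. -/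
def IsQ (Q : ℤ → R[X]) : Prop :=
  Q (-2) = -1 ∧ Q (-1) = 0 ∧ ∀ n : ℤ, 0 ≤ n → Q n = X * Q (n - 1) - Q (n - 2)

lemma Q_deg (Q : ℤ → R[X]) (hQ : IsQ Q) (n : ℕ) :
    ((Q n).Monic ∧ (Q n).natDegree = n) ∧
      ((Q (n + 1 : ℕ)).Monic ∧ (Q (n + 1 : ℕ)).natDegree = n + 1) := by
  obtain ⟨h2, h1, h⟩ := hQ
  have q0 : Q 0 = 1 := by rw [h 0 le_rfl]; simp [h1, h2]
  have q1 : Q 1 = X := by rw [h 1 (by norm_num)]; simp [q0, h1]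
  induction n with
  | zero => simp [q0, q1, monic_X]
  | succ n ih =>
    obtain ⟨⟨hm, hd⟩, ⟨hm', hd'⟩⟩ := ih
    refine ⟨⟨hm', hd'⟩, ?_⟩
    have e : Q ((n + 1 + 1 : ℕ) : ℤ) = X * Q (n + 1 : ℕ) - Q n := by
      rw [h _ (by positivity)]
      congr 3 <;> push_cast <;> ring_nf
    have hM : (X * Q (n + 1 : ℕ)).Monic := monic_X.mul hm'
    have hD : (X * Q (n + 1 : ℕ)).natDegree = n + 2 := by
      rw [monic_X.natDegree_mul hm', hd', natDegree_X]; ring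
    have hlt : (Q n).degree < (X * Q (n + 1 : ℕ)).degree := by
      apply degree_lt_degree; omega
    rw [e]
    refine ⟨hM.sub_of_left hlt, ?_⟩
    rw [natDegree_sub_eq_left_of_natDegree_lt (by omega), hD]

lemma a_ne (n : ℤ) (hn : 2 ≤ n) : (T (n + 1) + T (-n - 1) : R) ≠ 0 := by
  intro h
  have h2 : (T (n + 1) + T (-n - 1) : R) * T (n + 1) =
      Polynomial.toLaurent (X ^ (2 * n + 2).toNat + 1 : ℤ[X]) := by
    have : ((2 * n + 2).toNat : ℤ) = 2 * n + 2 := Int.toNat_of_nonneg (by omega)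
    simp only [map_add, map_pow, map_one, Polynomial.toLaurent_X, LaurentPolynomial.T_pow, this]
    rw [add_mul, ← LaurentPolynomial.T_add, ← LaurentPolynomial.T_add,
      ← LaurentPolynomial.T_zero]
    congr 2 <;> ring
  rw [h, zero_mul] at h2
  have h3 := (Polynomial.toLaurent_injective (R := ℤ)) (h2.symm.trans (map_zero _).symm)
  have := congrArg (Polynomial.eval 1) h3
  norm_num at this

lemma S_deg (n : ℤ) (hn : 2 ≤ n) (Q p q : R[X]) (hQ : Q.Monic) (hd : Q.natDegree = n.toNat)
    (hp : p.natDegree ≤ 1) (hq : q.natDegree ≤ 1) (a : R) (ha : a ≠ 0) :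
    (C a * (Q - p) - q).natDegree = n.toNat := by
  have h1 : (Q - p).natDegree = n.toNat := by
    rw [natDegree_sub_eq_left_of_natDegree_lt (by omega), hd]
  have h2 : (C a * (Q - p)).natDegree = n.toNat := by
    rw [natDegree_C_mul ha, h1]
  rw [natDegree_sub_eq_left_of_natDegree_lt (by omega), h2]

lemma span_deg (g : ℤ → R[X]) (hg : ∀ n, 2 ≤ n → (g n).natDegree = n.toNat) (r : R)
    (h : C r ∈ Submodule.span R (g '' {n : ℤ | 2 ≤ n})) : r = 0 := by
  rw [Finsupp.mem_span_image_iff_linearCombination] at h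
  obtain ⟨l, hl, he⟩ := h
  rw [Finsupp.mem_supported] at hl
  rw [Finsupp.linearCombination_apply, Finsupp.sum] at he
  have key : ∀ i ∈ l.support, (l i • g i).natDegree = i.toNat ∧ 2 ≤ i := by
    intro i hi
    have h2 : 2 ≤ i := hl hi
    rw [Polynomial.smul_eq_C_mul, natDegree_C_mul (Finsupp.mem_support_iff.1 hi), hg i h2]
    exact ⟨rfl, h2⟩
  have hs := Polynomial.natDegree_sum_eq_of_disjoint (fun i => l i • g i) l.support (by
    rintro i ⟨hi, _⟩ j ⟨hj, _⟩ hij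
    change (l i • g i).natDegree ≠ (l j • g j).natDegree
    rw [(key i hi).1, (key j hj).1]
    have := (key i hi).2
    have := (key j hj).2
    omega)
  rw [he, natDegree_C] at hs
  rcases l.support.eq_empty_or_nonempty with h0 | ⟨i, hi⟩
  · rw [h0, Finset.sum_empty] at he
    exact (C_eq_zero.1 he.symm)
  · have h3 := Finset.le_sup (f := fun i => (l i • g i).natDegree) hi
    rw [← hs] at h3
    have := key i hi
    omega

lemma sum_tel (m : ℕ) (n : ℤ) :
    (T 2 - T (-2) : R) * ∑ k ∈ Finset.Icc (1 : ℤ) m, T (n + 2 - 4 * k) =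
      T n - T (n - 4 * m) := by
  induction m with
  | zero => simp
  | succ m ih =>
    have : Finset.Icc (1 : ℤ) ((m + 1 : ℕ) : ℤ) = insert ((m + 1 : ℕ) : ℤ) (Finset.Icc (1 : ℤ) m) := by
      ext x; simp only [Finset.mem_Icc, Finset.mem_insert]; push_cast; omega
    rw [this, Finset.sum_insert (by simp), mul_add, ih, sub_mul, ← LaurentPolynomial.T_add,
      ← LaurentPolynomial.T_add]
    have e1 : (2 + (n + 2 - 4 * ((m + 1 : ℕ) : ℤ))) = n - 4 * m := by push_cast; ring
    have e2 : (-2 + (n + 2 - 4 * ((m + 1 : ℕ) : ℤ))) = n - 4 * ((m + 1 : ℕ) : ℤ) := by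
      push_cast; ring
    rw [e1, e2]; ring

/-- A Laurent polynomial divisible by infinitely many `A^(n+1) + A^(-n-1)` vanishes. -/
lemma dvd_zero' (x : R) (h : ∀ m : ℕ, 1 ≤ m → ∃ y : R, (T (2 * m + 1) + T (-(2 * m) - 1)) * y = x) :
    x = 0 := by
  obtain ⟨k, p, hp⟩ := LaurentPolynomial.exists_T_pow x
  set m := p.natDegree + 1 with hm
  obtain ⟨y, hy⟩ := h m (by omega)
  obtain ⟨j, q, hq⟩ := LaurentPolynomial.exists_T_pow y
  have hpoly : (X ^ (4 * m + 2) + 1 : ℤ[X]) * (q * X ^ k) = p * X ^ (2 * m + 1 + j) := by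
    apply Polynomial.toLaurent_injective
    simp only [map_mul, map_add, map_pow, map_one, Polynomial.toLaurent_X,
      LaurentPolynomial.T_pow, hp, hq, ← hy, mul_one]
    have : (T ((4 * m + 2 : ℕ) : ℤ) + 1 : R) =
        (T (2 * m + 1) + T (-(2 * m) - 1)) * T (2 * m + 1) := by
      rw [add_mul, ← LaurentPolynomial.T_add, ← LaurentPolynomial.T_add,
        ← LaurentPolynomial.T_zero]
      congr 2 <;> push_cast <;> ring
    rw [this]
    have e : (T ((2 * m + 1 + j : ℕ) : ℤ) : R) = T (2 * m + 1) * T j := by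
      rw [← LaurentPolynomial.T_add]; push_cast; rfl
    rw [e]; ring
  have hc : IsCoprime (X ^ (4 * m + 2) + 1 : ℤ[X]) (X ^ (2 * m + 1 + j)) := by
    apply IsCoprime.pow_right
    exact ⟨1, -X ^ (4 * m + 1), by ring⟩
  have hd : (X ^ (4 * m + 2) + 1 : ℤ[X]) ∣ p := hc.dvd_of_dvd_mul_right ⟨_, hpoly.symm⟩
  have hdeg : (X ^ (4 * m + 2) + 1 : ℤ[X]).natDegree = 4 * m + 2 := by
    simpa using natDegree_X_pow_add_C (n := 4 * m + 2) (r := (1 : ℤ))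
  have p0 : p = 0 := by
    by_contra hne
    have := Polynomial.natDegree_le_of_dvd hd hne
    omega
  rw [p0, map_zero] at hp
  have : x * T k * T (-k) = 0 := by rw [← hp, zero_mul]
  rwa [mul_assoc, ← LaurentPolynomial.T_add, add_neg_cancel, LaurentPolynomial.T_zero, mul_one]
    at this

lemma two_term_ne : (2 * (T 2 + 1) * T (-1) : R) ≠ 0 := by
  intro h
  have h1 : (2 * (T 2 + 1) * T (-1) : R) * T 1 = Polynomial.toLaurent (2 * (X ^ 2 + 1) : ℤ[X]) := by
    rw [mul_assoc, ← LaurentPolynomial.T_add]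
    have : Polynomial.toLaurent (2 : ℤ[X]) = (2 : R) := map_ofNat _ 2
    simp [this]
  rw [h, zero_mul] at h1
  have h3 := (Polynomial.toLaurent_injective (R := ℤ)) (h1.symm.trans (map_zero _).symm)
  have := congrArg (Polynomial.eval 1) h3
  norm_num at this

lemma functional_zero (x : R) (h : ∀ m : ℕ, 1 ≤ m → ∃ y : R,
    (T (2 * m + 1) + T (-(2 * m) - 1)) * y =
      (2 * (T 1 + T (-1)) * ∑ k ∈ Finset.Icc (1 : ℤ) m, T (2 * m + 2 - 4 * k)) * x) : x = 0 := by
  have : (2 * (T 2 + 1) * T (-1) : R) * x = 0 := by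
    apply dvd_zero'
    intro m hm
    obtain ⟨y, hy⟩ := h m hm
    have ht := sum_tel m (2 * m)
    have hb : (T 1 - T (-1) : R) * (T 1 + T (-1)) = T 2 - T (-2) := by
      have a1 : (T 1 * T 1 : R) = T 2 := by rw [← LaurentPolynomial.T_add]; rfl
      have a2 : (T (-1) * T (-1) : R) = T (-2) := by rw [← LaurentPolynomial.T_add]; rfl
      rw [← a1, ← a2]; ring
    have hy2 : (T (2 * m + 1) + T (-(2 * m) - 1)) * ((T 1 - T (-1)) * y) =
        2 * (T (2 * m) - T (2 * m - 4 * m)) * x := by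
      rw [← ht, ← hb]; linear_combination (T 1 - T (-1)) * hy
    refine ⟨T (2 * m) * (2 * x - T 1 * ((T 1 - T (-1)) * y)), ?_⟩
    have c1 : (T (2 * m + 1) : R) = T (2 * m) * T 1 := LaurentPolynomial.T_add _ _
    have c2 : (T (-(2 * m) - 1) : R) = T (-(2 * m)) * T (-1) := by
      rw [← LaurentPolynomial.T_add]; rfl
    have c3 : (T (2 * m - 4 * m) : R) = T (-(2 * m)) := by congr 1; ring
    have c4 : (T (2 * m) * T (-(2 * m)) : R) = 1 := by
      rw [← LaurentPolynomial.T_add]; simp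
    have c5 : (T 1 * T (-1) : R) = 1 := by
      rw [← LaurentPolynomial.T_add]; simp
    have c6 : (T 2 : R) = T 1 * T 1 := by rw [← LaurentPolynomial.T_add]; rfl
    rw [c1, c2, c3] at hy2
    rw [c1, c2, c6]
    generalize (T (2 * m) : R) = u at *
    generalize (T (-(2 * m)) : R) = v at *
    generalize (T 1 : R) = s at *
    generalize (T (-1) : R) = w at *
    linear_combination (-u * s) * hy2 + (2 * x * w + 2 * x * s) * c4 - 2 * x * s * c5
  exact (mul_eq_zero.1 this).resolve_left two_term_ne

lemma directSum_torsion {J : Type} (I : J → Ideal R) (z : DirectSum J fun j => R ⧸ I j)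
    (hz : ∀ f : (DirectSum J fun j => R ⧸ I j) →ₗ[R] R, f z = 0) : ∃ r : R, r ≠ 0 ∧ r • z = 0 := by
  classical
  have h : ∀ j, ∃ a : R, a ≠ 0 ∧ a • z j = 0 := by
    intro j
    by_cases hj : I j = ⊥
    · refine ⟨1, one_ne_zero, ?_⟩
      have := hz ((Submodule.quotEquivOfEqBot (I j) hj).toLinearMap ∘ₗ
        DirectSum.component R J (fun j => R ⧸ I j) j)
      have h2 : (Submodule.quotEquivOfEqBot (I j) hj) (z j) = 0 := this
      rw [one_smul]
      exact (LinearEquiv.map_eq_zero_iff _).1 h2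
    · obtain ⟨a, ha, h0⟩ := Submodule.exists_mem_ne_zero_of_ne_bot hj
      refine ⟨a, h0, ?_⟩
      obtain ⟨b, hb⟩ := Ideal.Quotient.mk_surjective (z j)
      rw [← hb]
      have : a • (Ideal.Quotient.mk (I j) b) = Ideal.Quotient.mk (I j) (a * b) := rfl
      rw [this, Ideal.Quotient.eq_zero_iff_mem]
      exact Ideal.mul_mem_right _ _ ha
  choose a ha h using h
  refine ⟨∏ j ∈ DFinsupp.support z, a j, Finset.prod_ne_zero_iff.2 fun j _ => ha j, ?_⟩
  refine DFinsupp.ext fun j => ?_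
  have e : ((∏ j ∈ DFinsupp.support z, a j) • z) j = (∏ j ∈ DFinsupp.support z, a j) • z j := rfl
  refine e.trans ?_
  by_cases hj : j ∈ DFinsupp.support z
  · rw [← Finset.prod_erase_mul _ _ hj, mul_smul, h, smul_zero]; rfl
  · rw [DFinsupp.notMem_support_iff.1 hj, smul_zero]; rfl

theorem stmt_9 (Q : ℤ → R[X]) (hQ : IsQ Q)
    (g : ℤ → R[X])
    (hgeven : ∀ n : ℤ, 2 ≤ n → Even n → g n =
      C (T (n + 1) + T (-n - 1)) * (Q n - 1) -
        C (2 * (T 1 + T (-1)) * ∑ k ∈ Finset.Icc (1 : ℤ) (n / 2), T (n + 2 - 4 * k)))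
    (hgodd : ∀ n : ℤ, 2 ≤ n → ¬ Even n → g n =
      C (T (n + 1) + T (-n - 1)) * (Q n - X) -
        C (2 * ∑ k ∈ Finset.Icc (1 : ℤ) ((n - 1) / 2), T (n + 1 - 4 * k)) * X)
    (S : Submodule R R[X]) (hS : S = Submodule.span R (g '' {n : ℤ | 2 ≤ n})) :
    ¬ ∃ (J : Type) (I : J → Ideal R),
      Nonempty ((R × R × (R[X] ⧸ S)) ≃ₗ[R] DirectSum J fun j => R ⧸ I j) := by
  rintro ⟨J, I, ⟨φ⟩⟩
  obtain ⟨r, hr, hz⟩ := directSum_torsion I (φ (0, 0, S.mkQ 1)) (by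
    intro f
    set F : R[X] →ₗ[R] R := f ∘ₗ φ.toLinearMap ∘ₗ LinearMap.inr R R _ ∘ₗ LinearMap.inr R R _ ∘ₗ S.mkQ
      with hF
    change F 1 = 0
    apply functional_zero
    intro m hm
    refine ⟨F (Q (2 * m) - 1), ?_⟩
    have hmem : g (2 * m) ∈ S := by
      rw [hS]
      exact Submodule.subset_span ⟨2 * m, show (2 : ℤ) ≤ 2 * m by omega, rfl⟩
    have h0 : F (g (2 * m)) = 0 := by
      have : S.mkQ (g (2 * m)) = 0 := by simpa using hmem
      simp only [hF, LinearMap.comp_apply, this, map_zero]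
    rw [hgeven (2 * m) (by omega) (even_two_mul _), show (2 * (m : ℤ)) / 2 = m by omega,
      ← Polynomial.smul_eq_C_mul, ← mul_one (C (2 * _ * _)), ← Polynomial.smul_eq_C_mul,
      map_sub, map_smul, map_smul, smul_eq_mul, smul_eq_mul, sub_eq_zero] at h0
    exact h0)
  rw [← map_smul, LinearEquiv.map_eq_zero_iff] at hz
  have hz2 : S.mkQ (r • (1 : R[X])) = 0 := by
    rw [map_smul]; exact congrArg (fun p => p.2.2) hz
  have hz3 : C r ∈ Submodule.span R (g '' {n : ℤ | 2 ≤ n}) := by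
    rw [← hS]
    rw [Polynomial.smul_eq_C_mul, mul_one] at hz2
    simpa using hz2
  refine hr (span_deg g ?_ r hz3)
  intro n hn
  obtain ⟨hm, hd⟩ := (Q_deg Q hQ n.toNat).1
  rw [Int.toNat_of_nonneg (by omega)] at hm hd
  by_cases he : Even n
  · rw [hgeven n hn he]
    exact S_deg n hn _ _ _ hm hd (by simp) (by rw [natDegree_C]; omega) _ (a_ne n hn)
  · rw [hgodd n hn he]
    exact S_deg n hn _ _ _ hm hd (by simp) ((natDegree_C_mul_le _ _).trans natDegree_X_le) _ (a_ne n hn)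
end
end

section
/- The quotient R-module R[t]/S has no 2-torsion: for every element m of R[t]/S, if 2·m = 0 then m = 0. -/
open Polynomial
open LaurentPolynomial (T)

noncomputable section

lemma two_dvd_of_map (c : R)
    (h : AddMonoidAlgebra.mapRingHom ℤ (Int.castRingHom (ZMod 2)) c = 0) : (2 : R) ∣ c := by
  refine ⟨AddMonoidAlgebra.ofCoeff (c.coeff.mapRange (fun z => z / 2) (by simp)), ?_⟩
  apply LaurentPolynomial.ext
  intro k
  have h1 : ((c.coeff k : ℤ) : ZMod 2) = 0 := by
    have := congrArg (fun q => q.coeff k) h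
    simpa using this
  have h2 : (2 : ℤ) ∣ c.coeff k := by
    exact (ZMod.intCast_zmod_eq_zero_iff_dvd _ 2).1 h1
  rw [two_mul]
  simp only [AddMonoidAlgebra.coeff_add, Finsupp.add_apply, Finsupp.mapRange_apply]
  omega

lemma two_dvd_cancel (c : R) (n : ℤ) (hn : 2 ≤ n)
    (h : (2 : R) ∣ c * (T (n + 1) + T (-n - 1))) : (2 : R) ∣ c := by
  apply two_dvd_of_map
  set φ := AddMonoidAlgebra.mapRingHom ℤ (Int.castRingHom (ZMod 2)) with hφ
  obtain ⟨d, hd⟩ := h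
  have h2 : φ 2 = 0 := by
    rw [map_ofNat]
    have : ((2 : ℕ) : LaurentPolynomial (ZMod 2)) = LaurentPolynomial.C ((2 : ℕ) : ZMod 2) := by
      rw [map_natCast]
    have h3 : ((2 : ℕ) : ZMod 2) = 0 := by decide
    rw [h3, map_zero] at this
    exact_mod_cast this
  have h1 := congrArg φ hd
  rw [map_mul, map_mul, h2, zero_mul] at h1
  rcases mul_eq_zero.1 h1 with h | h
  · exact h
  · exfalso
    have := congrArg (fun q => q.coeff (n + 1)) h
    have hne : ¬ (-n - 1 = n + 1) := by omega
    simp [hφ, hne] at this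

lemma Q_props (Q : ℤ → R[X]) (hQ : IsQ Q) (n : ℕ) :
    ((Q n).natDegree ≤ n ∧ (Q n).coeff n = 1) ∧
    ((Q (n + 1 : ℕ)).natDegree ≤ n + 1 ∧ (Q (n + 1 : ℕ)).coeff (n + 1) = 1) := by
  obtain ⟨h1, h2, h3⟩ := hQ
  have q0 : Q 0 = 1 := by rw [h3 0 le_rfl]; simp [h1, h2]
  have q1 : Q 1 = X := by rw [h3 1 (by norm_num)]; simp [h2, q0]
  induction n with
  | zero => simp [q0, q1]
  | succ n ih =>
    refine ⟨ih.2, ?_⟩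
    have e : Q ((n + 1 + 1 : ℕ) : ℤ) = X * Q ((n + 1 : ℕ) : ℤ) - Q (n : ℤ) := by
      rw [h3 _ (by positivity)]
      congr 2
      · congr 1; push_cast; ring
      · push_cast; ring
    rw [e]
    constructor
    · refine (natDegree_sub_le _ _).trans (max_le ?_ (by omega))
      refine natDegree_mul_le.trans ?_
      have := natDegree_X_le (R := R)
      omega
    · rw [coeff_sub, coeff_X_mul, ih.2.2, coeff_eq_zero_of_natDegree_lt (by omega), sub_zero]

theorem stmt_11 (Q : ℤ → R[X]) (hQ : IsQ Q)
    (g : ℤ → R[X])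
    (hgeven : ∀ n : ℤ, 2 ≤ n → Even n → g n =
      C (T (n + 1) + T (-n - 1)) * (Q n - 1) -
        C (2 * (T 1 + T (-1)) * ∑ k ∈ Finset.Icc (1 : ℤ) (n / 2), T (n + 2 - 4 * k)))
    (hgodd : ∀ n : ℤ, 2 ≤ n → ¬ Even n → g n =
      C (T (n + 1) + T (-n - 1)) * (Q n - X) -
        C (2 * ∑ k ∈ Finset.Icc (1 : ℤ) ((n - 1) / 2), T (n + 1 - 4 * k)) * X)
    (S : Submodule R R[X]) (hS : S = Submodule.span R (g '' {n : ℤ | 2 ≤ n})) :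
    ∀ m : R[X] ⧸ S, (2 : R) • m = 0 → m = 0 := by
  have hg : ∀ n : ℕ, 2 ≤ n → (g n).natDegree ≤ n ∧
      (g n).coeff n = T ((n : ℤ) + 1) + T (-(n : ℤ) - 1) := by
    intro n hn
    obtain ⟨⟨d, c⟩, -⟩ := Q_props Q hQ n
    have d1 : (1 : R[X]).natDegree ≤ n := by simp
    have dX : (X : R[X]).natDegree ≤ n := natDegree_X_le.trans (by omega)
    have c1 : (1 : R[X]).coeff n = 0 := by rw [coeff_one, if_neg (by omega)]
    have cX : (X : R[X]).coeff n = 0 := by rw [coeff_X, if_neg (by omega)]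
    by_cases he : Even (n : ℤ)
    · rw [hgeven n (by exact_mod_cast hn) he]
      constructor
      · refine (natDegree_sub_le _ _).trans (max_le ?_ ?_)
        · exact (natDegree_C_mul_le _ _).trans ((natDegree_sub_le _ _).trans (max_le d d1))
        · rw [natDegree_C]; omega
      · rw [coeff_sub, coeff_C_mul, coeff_sub, c, c1, coeff_C, if_neg (by omega)]
        ring
    · rw [hgodd n (by exact_mod_cast hn) he]
      constructor
      · refine (natDegree_sub_le _ _).trans (max_le ?_ ?_)
        · exact (natDegree_C_mul_le _ _).trans ((natDegree_sub_le _ _).trans (max_le d dX))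
        · exact (natDegree_C_mul_le _ _).trans dX
      · rw [coeff_sub, coeff_C_mul, coeff_sub, c, cX, coeff_C_mul, cX]
        ring
  have htwo : (2 : R[X]) ≠ 0 := by
    intro h
    have h1 : (1 + 1 : R[X]) = 0 := by rw [one_add_one_eq_two]; exact h
    have h2 : (1 + 1 : R) = 0 := by
      have := congrArg (fun q : R[X] => q.coeff 0) h1
      simpa only [coeff_add, coeff_one_zero, coeff_zero] using this
    have h3 := congrArg (fun q : R => q.coeff 0) h2
    rw [← LaurentPolynomial.T_zero] at h3
    simp only [AddMonoidAlgebra.coeff_add, Finsupp.add_apply, LaurentPolynomial.T_apply] at h3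
    norm_num at h3
  have key : ∀ N : ℕ, ∀ p ∈ Submodule.span R ((fun n : ℕ => g n) '' {n : ℕ | 2 ≤ n ∧ n < N}),
      ∀ f : R[X], p = 2 * f → f ∈ S := by
    intro N
    induction N with
    | zero =>
      intro p hp f hf
      simp at hp
      rw [hp] at hf
      rcases mul_eq_zero.1 hf.symm with h | h
      · exact absurd h htwo
      · rw [h]; exact S.zero_mem
    | succ N ih =>
      intro p hp f hf
      by_cases hN : 2 ≤ N
      · have hset : {n : ℕ | 2 ≤ n ∧ n < N + 1} = insert N {n : ℕ | 2 ≤ n ∧ n < N} := by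
          ext k; simp only [Set.mem_ofPred_eq, Set.mem_insert_iff]; omega
        rw [hset, Set.image_insert_eq, Submodule.mem_span_insert] at hp
        obtain ⟨a, z, hz, rfl⟩ := hp
        have hz0 : z.coeff N = 0 := by
          have : Submodule.span R ((fun n : ℕ => g n) '' {n : ℕ | 2 ≤ n ∧ n < N}) ≤
              LinearMap.ker (lcoeff R N) := by
            rw [Submodule.span_le]
            rintro _ ⟨k, ⟨hk, hk'⟩, rfl⟩
            exact coeff_eq_zero_of_natDegree_lt ((hg k hk).1.trans_lt hk')
          exact this hz
        have hc := congrArg (fun q : R[X] => q.coeff N) hf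
        simp only [coeff_add, coeff_smul, hz0, (hg N hN).2, add_zero, smul_eq_mul] at hc
        rw [two_mul, coeff_add, ← two_mul] at hc
        obtain ⟨b, rfl⟩ := two_dvd_cancel a N (by exact_mod_cast hN) ⟨_, hc⟩
        have hgS : g N ∈ S := by
          rw [hS]
          exact Submodule.subset_span ⟨N, by simpa using hN, rfl⟩
        have := ih z hz (f - b • g N) (by
          rw [mul_sub, ← hf, two_mul b, add_smul, two_mul]
          abel)
        have h3 := S.add_mem this (S.smul_mem b hgS)
        simpa using h3
      · have hset : {n : ℕ | 2 ≤ n ∧ n < N + 1} = {n : ℕ | 2 ≤ n ∧ n < N} := by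
          ext k; simp only [Set.mem_ofPred_eq]; omega
        rw [hset] at hp
        exact ih p hp f hf
  have hex : ∀ p ∈ S, ∃ N : ℕ,
      p ∈ Submodule.span R ((fun n : ℕ => g n) '' {n : ℕ | 2 ≤ n ∧ n < N}) := by
    intro p hp
    rw [hS] at hp
    induction hp using Submodule.span_induction with
    | mem x hx =>
      obtain ⟨n, hn, rfl⟩ := hx
      have hn' : (2 : ℤ) ≤ n := hn
      lift n to ℕ using by omega
      exact ⟨n + 1, Submodule.subset_span ⟨n, ⟨by omega, by omega⟩, rfl⟩⟩
    | zero => exact ⟨0, Submodule.zero_mem _⟩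
    | add x y _ _ hx hy =>
      obtain ⟨N, hN⟩ := hx
      obtain ⟨M, hM⟩ := hy
      refine ⟨N + M, Submodule.add_mem _ (Submodule.span_mono (Set.image_mono ?_) hN)
        (Submodule.span_mono (Set.image_mono ?_) hM)⟩
      · rintro k ⟨h1, h2⟩; exact ⟨h1, by omega⟩
      · rintro k ⟨h1, h2⟩; exact ⟨h1, by omega⟩
    | smul a x _ hx =>
      obtain ⟨N, hN⟩ := hx
      exact ⟨N, Submodule.smul_mem _ a hN⟩
  intro m
  obtain ⟨f, rfl⟩ := Submodule.Quotient.mk_surjective S m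
  intro h
  rw [← Submodule.Quotient.mk_smul, Submodule.Quotient.mk_eq_zero] at h
  rw [Submodule.Quotient.mk_eq_zero]
  obtain ⟨N, hN⟩ := hex _ h
  exact key N _ hN f (by rw [two_smul, two_mul])
end
end

section
/- For every integer n ≥ 1 and every integer i with 1 ≤ i ≤ (n+1)/2, the element (−A^{n+2}+A^{−n−2})·(∑_{k=0}^{i−1} Q_{n−2k}) − q̂_{n,i}·Q_{n−2i} of R[t] lies in the R-submodule of R[t] generated by the elements P_k − P_{−k} for 1 ≤ k ≤ n, where q̂_{n,i} = ∑_{k=1}^{i} (−A^{n−4k+2} + A^{−n+4k−2}). -/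
open Polynomial
open LaurentPolynomial (T)

noncomputable section

/-- `P` is the family of polynomials `P n ∈ R[t]` defined by `P 0 = -A^2 - A^-2`,
`P 1 = -A^3 t` and the recurrence `P n = A t P (n-1) - A^2 P (n-2)` for all `n : ℤ`. -/
def IsP (P : ℤ → R[X]) : Prop :=
  P 0 = C (-T 2 - T (-2)) ∧ P 1 = C (-T 3) * X ∧
    ∀ n : ℤ, P n = C (T 1) * X * P (n - 1) - C (T 2) * P (n - 2)

lemma tau_add (a b : ℤ) : (C (T (a + b)) : R[X]) = C (T a) * C (T b) := by
  rw [LaurentPolynomial.T_add, C_mul]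

lemma tau_inv : (C (T 1) : R[X]) * C (T (-1)) = 1 := by
  rw [← tau_add]; simp

lemma tau_two : (C (T 2) : R[X]) = C (T 1) * C (T 1) := by
  rw [← tau_add]; norm_num

lemma tau_three : (C (T 3) : R[X]) = C (T 1) * C (T 1) * C (T 1) := by
  rw [← tau_add, ← tau_add]; norm_num

lemma tau_neg_two : (C (T (-2)) : R[X]) = C (T (-1)) * C (T (-1)) := by
  rw [← tau_add]; norm_num

lemma P_pos (P : ℤ → R[X]) (hP : IsP P) (Q : ℤ → R[X]) (hQ : IsQ Q) (n : ℕ) :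
    P n = C (T n) * (C (T (-2)) * Q (n - 2) - C (T 2) * Q n) ∧
    P (n + 1) = C (T (n + 1)) * (C (T (-2)) * Q (n - 1) - C (T 2) * Q (n + 1)) := by
  obtain ⟨p0, p1, pr⟩ := hP
  obtain ⟨q2, q1, qr⟩ := hQ
  have q0 : Q 0 = 1 := by rw [qr 0 le_rfl]; norm_num [q2, q1]
  have q11 : Q 1 = X := by rw [qr 1 (by norm_num)]; norm_num [q0, q1]
  induction n with
  | zero =>
    constructor
    · simp [p0, q0, q2]; ring
    · simp [p1, q11, q1, tau_two, tau_three]; ring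
  | succ n ih =>
    obtain ⟨h1, h2⟩ := ih
    push_cast
    have e1 := pr ((n : ℤ) + 1 + 1)
    have e2 := qr ((n : ℤ) + 1 + 1) (by positivity)
    have e3 := qr (n : ℤ) (by positivity)
    rw [show (n : ℤ) + 1 + 1 - 1 = n + 1 by ring, show (n : ℤ) + 1 + 1 - 2 = n by ring] at e1 e2
    rw [show (n : ℤ) + 1 - 2 = n - 1 by ring, show (n : ℤ) + 1 - 1 = n by ring]
    refine ⟨h2, ?_⟩
    rw [e1, h1, h2, e2, tau_add (n + 1) 1, tau_add n 1, tau_two]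
    have e4 : Q (n - 2) = X * Q (n - 1) - Q n := by rw [e3]; ring
    rw [e4]
    ring

lemma P_neg (P : ℤ → R[X]) (hP : IsP P) (Q : ℤ → R[X]) (hQ : IsQ Q) (n : ℕ) :
    P (-n) = C (T (-n)) * (C (T 2) * Q (n - 2) - C (T (-2)) * Q n) ∧
    P (-n - 1) = C (T (-n - 1)) * (C (T 2) * Q (n - 1) - C (T (-2)) * Q (n + 1)) := by
  obtain ⟨p0, p1, pr⟩ := hP
  obtain ⟨q2, q1, qr⟩ := hQ
  have q0 : Q 0 = 1 := by rw [qr 0 le_rfl]; norm_num [q2, q1]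
  have q11 : Q 1 = X := by rw [qr 1 (by norm_num)]; norm_num [q0, q1]
  have inv := tau_inv
  have back : ∀ m : ℤ, P (m - 2) = C (T (-1)) * X * P (m - 1) - C (T (-2)) * P m := by
    intro m
    rw [pr m, tau_two, tau_neg_two]
    linear_combination (-P (m-2) * (C (T 1) * C (T (-1)) + 1) + C (T (-1)) * X * P (m - 1)) * inv
  induction n with
  | zero =>
    constructor
    · simp [p0, q0, q2]; ring
    · have := back 1
      norm_num at this
      simp [this, p0, p1, q11, q1, tau_two, tau_three, tau_neg_two]
      linear_combination (C (T 1) * X * C (T 1) * C (T (-1)) ) * inv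
  | succ n ih =>
    obtain ⟨h1, h2⟩ := ih
    push_cast
    have e1 := back (-(n : ℤ))
    have e2 := qr ((n : ℤ) + 1 + 1) (by positivity)
    have e3 := qr (n : ℤ) (by positivity)
    rw [show (n : ℤ) + 1 + 1 - 1 = n + 1 by ring, show (n : ℤ) + 1 + 1 - 2 = n by ring] at e2
    rw [show -((n : ℤ) + 1) - 1 = -n - 2 by ring, show -((n : ℤ) + 1) = -n - 1 by ring,
      show (n : ℤ) + 1 - 2 = n - 1 by ring, show (n : ℤ) + 1 - 1 = n by ring]
    refine ⟨h2, ?_⟩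
    rw [e1, h1, h2, e2, show -(n : ℤ) - 2 = -n + -1 + -1 by ring,
      show -(n : ℤ) - 1 = -n + -1 by ring, tau_add (-n + -1) (-1), tau_add (-n) (-1), tau_neg_two]
    have e4 : Q (n - 2) = X * Q (n - 1) - Q n := by rw [e3]; ring
    rw [e4]
    ring

/-- The scalar `-A^m + A^{-m}`. -/
def aa (m : ℤ) : R := -T m + T (-m)

lemma D_eq (P : ℤ → R[X]) (hP : IsP P) (Q : ℤ → R[X]) (hQ : IsQ Q) (m : ℤ) (hm : 1 ≤ m) :
    P m - P (-m) = C (aa (m + 2)) * Q m - C (aa (m - 2)) * Q (m - 2) := by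
  lift m to ℕ using by omega
  rw [(P_pos P hP Q hQ m).1, (P_neg P hP Q hQ m).1]
  simp only [aa, C_add, C_neg]
  rw [show -((m : ℤ) + 2) = -m + -2 by ring, show -((m : ℤ) - 2) = -m + 2 by ring,
    show (m : ℤ) - 2 = m + -2 by ring]
  simp only [tau_add]
  ring

/-- The quantum integer `∑_{k=0}^{i} A^{2i-4k}`. -/
def cc (i : ℕ) : R := ∑ k ∈ Finset.range (i + 1), T (2 * i - 4 * k)

lemma cc_mul (i : ℕ) (m : ℤ) :
    cc i * aa m = ∑ k ∈ Finset.range (i + 1), aa (m + 2 * i - 4 * k) := by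
  have h : cc i = ∑ k ∈ Finset.range (i + 1), T (-(2 * i - 4 * k)) := by
    rw [cc, ← Finset.sum_flip]
    refine Finset.sum_congr rfl fun k hk => ?_
    have : k ≤ i := by simpa [Nat.lt_succ_iff] using hk
    congr 1
    push_cast [this]
    ring
  simp only [aa, mul_add, mul_neg, Finset.sum_add_distrib, Finset.sum_neg_distrib]
  congr 1
  · rw [cc, Finset.sum_mul]
    congr 1
    refine Finset.sum_congr rfl fun k _ => ?_
    rw [← LaurentPolynomial.T_add]
    congr 1; ring
  · rw [h, Finset.sum_mul]
    refine Finset.sum_congr rfl fun k _ => ?_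
    rw [← LaurentPolynomial.T_add]
    congr 1; ring

lemma sum_Icc_zero {M : Type*} [AddCommMonoid M] (f : ℤ → M) (m : ℕ) :
    ∑ k ∈ Finset.Icc (0 : ℤ) ((m : ℤ) - 1), f k = ∑ k ∈ Finset.range m, f k := by
  symm
  refine Finset.sum_bij (fun k _ => (k : ℤ)) ?_ ?_ ?_ ?_
  · intro k hk; simp at hk ⊢; omega
  · intro a _ b _ h; simpa using h
  · intro b hb
    simp at hb
    exact ⟨b.toNat, by simp; omega, by simp; omega⟩
  · intros; rfl

lemma sum_Icc_one {M : Type*} [AddCommMonoid M] (f : ℤ → M) (m : ℕ) :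
    ∑ k ∈ Finset.Icc (1 : ℤ) (m : ℤ), f k = ∑ k ∈ Finset.range m, f (k + 1) := by
  symm
  refine Finset.sum_bij (fun k _ => (k : ℤ) + 1) ?_ ?_ ?_ ?_
  · intro k hk; simp at hk ⊢; omega
  · intro a _ b _ h; simpa using h
  · intro b hb
    simp at hb
    exact ⟨(b - 1).toNat, by simp; omega, by simp; omega⟩
  · intros; rfl

lemma main_eq (Q : ℤ → R[X]) (n : ℤ) (i : ℕ) :
    C (aa (n + 2)) * (∑ k ∈ Finset.range i, Q (n - 2 * k)) -
      C (∑ k ∈ Finset.range i, aa (n - 4 * (k + 1) + 2)) * Q (n - 2 * i) =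
    ∑ j ∈ Finset.range i, C (cc j) * (C (aa (n - 2 * j + 2)) * Q (n - 2 * j) -
      C (aa (n - 2 * j - 2)) * Q (n - 2 * j - 2)) := by
  induction i with
  | zero => simp
  | succ i ih =>
    have h1 : cc i * aa (n - 2 * i + 2) =
        aa (n + 2) + ∑ k ∈ Finset.range i, aa (n - 4 * (k + 1) + 2) := by
      rw [cc_mul, Finset.sum_range_succ', add_comm]
      congr 1
      · congr 1; push_cast; ring
      · refine Finset.sum_congr rfl fun k _ => ?_
        congr 1; push_cast; ring
    have h2 : cc i * aa (n - 2 * i - 2) =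
        ∑ k ∈ Finset.range (i + 1), aa (n - 4 * (k + 1) + 2) := by
      rw [cc_mul]
      refine Finset.sum_congr rfl fun k _ => ?_
      congr 1; ring
    rw [Finset.sum_range_succ (fun j : ℕ => C (cc j) * _), ← ih, ← h2, mul_sub, ← mul_assoc,
      ← mul_assoc, ← C_mul, ← C_mul, h1, Finset.sum_range_succ (fun k : ℕ => Q _)]
    rw [show n - 2 * ((i + 1 : ℕ) : ℤ) = n - 2 * i - 2 by push_cast; ring, C_add]
    ring

theorem stmt_13 (P : ℤ → R[X]) (hP : IsP P) (Q : ℤ → R[X]) (hQ : IsQ Q)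
    (n i : ℤ) (hn : 1 ≤ n) (hi1 : 1 ≤ i) (hi2 : i ≤ (n + 1) / 2) :
    C (-T (n + 2) + T (-n - 2)) * (∑ k ∈ Finset.Icc (0 : ℤ) (i - 1), Q (n - 2 * k)) -
      C (∑ k ∈ Finset.Icc (1 : ℤ) i, (-T (n - 4 * k + 2) + T (-n + 4 * k - 2))) *
        Q (n - 2 * i) ∈
      Submodule.span R ((fun k : ℤ => P k - P (-k)) '' {k : ℤ | 1 ≤ k ∧ k ≤ n}) := by
  lift i to ℕ using by omega
  have e1 : (-T (n + 2) + T (-n - 2) : R) = aa (n + 2) := by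
    rw [aa]; congr 2; ring
  have e2 : ∀ k : ℤ, (-T (n - 4 * k + 2) + T (-n + 4 * k - 2) : R) = aa (n - 4 * k + 2) := by
    intro k; rw [aa]; congr 2; ring
  simp only [e1, e2]
  rw [sum_Icc_zero (fun k => Q (n - 2 * k)), sum_Icc_one (fun k => aa (n - 4 * k + 2)), main_eq]
  refine Submodule.sum_mem _ fun j hj => ?_
  have hj : j < i := by simpa using hj
  rw [← D_eq P hP Q hQ (n - 2 * j) (by omega), ← smul_eq_C_mul]
  exact Submodule.smul_mem _ _ (Submodule.subset_span ⟨n - 2 * j, ⟨by omega, by omega⟩, rfl⟩)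
end
end
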